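/- If a continuous map f : I → I of a compact interval I has a period-m point for some odd integer m ≥ 3, then f has a period-(m+2) point. -/

import Mathlib

/-- `x` is a periodic point of `f` with least period `m`. -/
def PeriodPt (f : ℝ → ℝ) (m : ℕ) (x : ℝ) : Prop :=
  f^[m] x = x ∧ ∀ i : ℕ, 0 < i → i < m → f^[i] x ≠ x

/-!
In a cycle without fixed points, the last point `c` moving right and its successor `d` satisfy
`f d ≤ c < d ≤ f c`. So there are a fixed point `z` between `c` and `d` and a point `v < z` with
`f v = d`, and `f^[2] v < v` unless `c` has period two, which an odd period excludes. Let `y` be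
the last fixed point of `f^[2]` to the left of `v`. For odd `n` the iterate `f^[n]` moves `y` to
the right, as `f` does. If `f^[n]` fixes a point of `(y, v]`, then `f^[n + 2]` moves that point to
the left, because `f^[2]` does, so `f^[n + 2]` has a fixed point strictly between it and `y`. Since
`d` has period `m`, also `f^[m + 2] v = f^[2] v < v`, so `f^[m + 2]` has a least fixed point `p` in
`(y, v]`. Were the period of `p` a proper divisor of `m + 2`, climbing from it in steps of two would
give a smaller one.
-/

open Function Set

section Orbit

variable {α : Type*} {f : α → α} {x : α}

lemma finite_range_iterate (hx : x ∈ periodicPts f) : (range (f^[·] x)).Finite :=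
  ((finite_Iio (minimalPeriod f x)).image (f^[·] x)).subset <| range_subset_iff.2 fun n =>
    ⟨n % minimalPeriod f x, Nat.mod_lt _ (minimalPeriod_pos_of_mem_periodicPts hx),
      iterate_mod_minimalPeriod_eq⟩

lemma mapsTo_range_iterate (f : α → α) (x : α) :
    MapsTo f (range (f^[·] x)) (range (f^[·] x)) := by
  rintro _ ⟨n, rfl⟩
  exact ⟨n + 1, iterate_succ_apply' f n x⟩

lemma iterate_eq_apply_of_isPeriodicPt_two_of_odd {n : ℕ} (hx : IsPeriodicPt f 2 x)
    (hn : Odd n) : f^[n] x = f x := by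
  rw [← hx.iterate_mod_apply n, Nat.odd_iff.1 hn, iterate_one]

lemma iterate_add_two_eq_of_isPeriodicPt_apply {n : ℕ} (hx : IsPeriodicPt f n (f x)) :
    f^[n + 2] x = f^[2] x := by
  rw [iterate_succ_apply, iterate_succ_apply', hx.eq]
  rfl

lemma exists_lt_apply_le_le_apply_of_finite [LinearOrder α] {P : Set α} (hP : P.Finite)
    (hne : P.Nonempty) (hmaps : MapsTo f P P) (hfix : ∀ p ∈ P, ¬IsFixedPt f p) :
    ∃ c ∈ P, ∃ d ∈ P, c < d ∧ f d ≤ c ∧ d ≤ f c := by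
  obtain ⟨u, hu, hmin⟩ := exists_min_image P id hP hne
  obtain ⟨c, ⟨hc, hcf⟩, hmax⟩ : ∃ c ∈ {p ∈ P | p < f p}, ∀ p ∈ {p ∈ P | p < f p}, p ≤ c :=
    exists_max_image _ id (hP.subset (sep_subset _ _))
      ⟨u, hu, (hmin _ (hmaps hu)).lt_of_ne' (hfix u hu)⟩
  obtain ⟨d, ⟨hd, hcd⟩, hsucc⟩ : ∃ d ∈ {p ∈ P | c < p}, ∀ p ∈ {p ∈ P | c < p}, d ≤ p :=
    exists_min_image _ id (hP.subset (sep_subset _ _)) ⟨f c, hmaps hc, hcf⟩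
  have hfd : f d < d :=
    (not_lt.1 fun h => hcd.not_ge (hmax d ⟨hd, h⟩)).lt_of_ne (hfix d hd)
  exact ⟨c, hc, d, hd, hcd, not_lt.1 fun h => hfd.not_ge (hsucc (f d) ⟨hmaps hd, h⟩),
    hsucc (f c) ⟨hmaps hc, hcf⟩⟩

end Orbit

lemma isCompact_inter_fixedPoints {X : Type*} [TopologicalSpace X] [T2Space X] {K : Set X}
    {g : X → X} (hK : IsCompact K) (hg : ContinuousOn g K) : IsCompact (K ∩ fixedPoints g) :=
  hK.of_isClosed_subset (hK.isClosed.isClosed_eq hg continuousOn_id) inter_subset_left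

/-- The interval `(y, v]` on which periodic points of odd period are found: `f^[2]` moves its
points to the left, while the excluded endpoint `y` is fixed by `f^[2]` and moved to the right
by `f`. -/
structure IsDescentInterval {α : Type*} [Preorder α] (f : α → α) (y v : α) : Prop where
  lt : y < v
  isPeriodicPt_left : IsPeriodicPt f 2 y
  lt_apply_left : y < f y
  iterate_two_lt : ∀ t ∈ Ioc y v, f^[2] t < t

lemma IsDescentInterval.lt_iterate_left {α : Type*} [Preorder α] {f : α → α} {y v : α} {n : ℕ}
    (h : IsDescentInterval f y v) (hn : Odd n) : y < f^[n] y :=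
  (iterate_eq_apply_of_isPeriodicPt_two_of_odd h.isPeriodicPt_left hn).symm ▸ h.lt_apply_left

section IntermediateValue

variable {α : Type*} [ConditionallyCompleteLinearOrder α] [DenselyOrdered α]
  [TopologicalSpace α] [OrderTopology α] {f : α → α}

lemma exists_isFixedPt_forall_Ioc_apply_lt {u w : α} (hf : ContinuousOn f (Icc u w))
    (huw : u ≤ w) (hu : u ≤ f u) (hw : f w < w) :
    ∃ y ∈ Ico u w, IsFixedPt f y ∧ ∀ t ∈ Ioc y w, f t < t := by
  obtain ⟨y, ⟨hy, hfy⟩, hlast⟩ := (isCompact_inter_fixedPoints isCompact_Icc hf).exists_isGreatest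
    (exists_mem_Icc_isFixedPt hf huw hu hw.le)
  refine ⟨y, ⟨hy.1, hy.2.lt_of_ne fun h => hw.ne (h ▸ hfy)⟩, hfy, fun t ht => ?_⟩
  by_contra! htf
  have hut : u ≤ t := hy.1.trans ht.1.le
  obtain ⟨q, hq, hfq⟩ :=
    exists_mem_Icc_isFixedPt (hf.mono (Icc_subset_Icc_left hut)) ht.2 htf hw.le
  exact (ht.1.trans_le hq.1).not_ge (hlast ⟨⟨hut.trans hq.1, hq.2⟩, hfq⟩)

lemma exists_isFixedPt_and_preimage {c d : α} (hf : ContinuousOn f (Icc c d)) (hcd : c < d)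
    (hfd : f d ≤ c) (hfc : d ≤ f c) :
    ∃ z ∈ Ioo c d, IsFixedPt f z ∧ ∃ v ∈ Ico c z, f v = d := by
  obtain ⟨z, hz, hfz⟩ := exists_mem_Icc_isFixedPt hf hcd.le (hcd.le.trans hfc) (hfd.trans hcd.le)
  have hcz : c < z := hz.1.lt_of_ne fun h => (hcd.trans_le hfc).ne (h ▸ hfz.symm)
  have hzd : z < d := hz.2.lt_of_ne fun h => (hfd.trans_lt hcd).ne (h ▸ hfz)
  obtain ⟨v, hv, hfv⟩ := intermediate_value_Icc' hcz.le (hf.mono (Icc_subset_Icc_right hzd.le))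
    ⟨hfz.trans_le hzd.le, hfc⟩
  have hvz : v ≠ z := fun h => hzd.ne (hfz.symm.trans (h ▸ hfv))
  exact ⟨z, ⟨hcz, hzd⟩, hfz, v, ⟨hv.1, hv.2.lt_of_ne hvz⟩, hfv⟩

lemma lt_apply_of_forall_Ioc_iterate_two_lt {y v z : α} (hf : ContinuousOn f (Icc y v))
    (hyv : y ≤ v) (hvz : v < z) (hz : IsFixedPt f z) (hzv : z ≤ f v) (hy : IsPeriodicPt f 2 y)
    (hlt : ∀ t ∈ Ioc y v, f^[2] t < t) : y < f y := by
  -- Otherwise `f` sends some `q ≤ v` to the fixed point `z`, whence `f^[2] q = z > q`.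
  by_contra! hfy
  obtain ⟨q, hq, hfq⟩ := intermediate_value_Icc hyv hf ⟨hfy.trans (hyv.trans hvz.le), hzv⟩
  have hqz : f^[2] q = z := (congrArg f hfq).trans hz
  have hq2 : f^[2] q ≤ q := by
    rcases hq.1.eq_or_lt with rfl | hyq
    · exact hy.eq.le
    · exact (hlt q ⟨hyq, hq.2⟩).le
  exact (hq.2.trans_lt hvz).not_ge (hqz ▸ hq2)

lemma exists_isDescentInterval {u c d : α} (hf : ContinuousOn f (Icc u d))
    (hf2 : ContinuousOn f^[2] (Icc u d)) (huc : u ≤ c) (hcd : c < d) (hu : u ≤ f^[2] u)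
    (hfd : f d ≤ c) (hfc : d ≤ f c) (hc : ¬IsPeriodicPt f 2 c) :
    ∃ y v, IsDescentInterval f y v ∧ Icc y v ⊆ Icc u d ∧ f v = d := by
  obtain ⟨z, hz, hfz, v, hv, hfv⟩ :=
    exists_isFixedPt_and_preimage (hf.mono (Icc_subset_Icc_left huc)) hcd hfd hfc
  have hf2v : f^[2] v = f d := congrArg f hfv
  have hv2 : f^[2] v < v := by
    refine (hf2v.trans_le (hfd.trans hv.1)).lt_of_ne fun h => hc ?_
    have hvc : v = c := (h ▸ hf2v ▸ hfd).antisymm hv.1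
    exact hvc ▸ h
  have hvd : v ≤ d := (hv.2.trans hz.2).le
  obtain ⟨y, hy, hy2, hlt⟩ := exists_isFixedPt_forall_Ioc_apply_lt
    (hf2.mono (Icc_subset_Icc_right hvd)) (huc.trans hv.1) hu hv2
  have hsub : Icc y v ⊆ Icc u d := Icc_subset_Icc hy.1 hvd
  exact ⟨y, v, ⟨hy.2, hy2, lt_apply_of_forall_Ioc_iterate_two_lt (hf.mono hsub) hy.2.le hv.2 hfz
    (hz.2.le.trans_eq hfv.symm) hy2 hlt, hlt⟩, hsub, hfv⟩

namespace IsDescentInterval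

variable {y v p : α} {n : ℕ}

lemma exists_isPeriodicPt_add_two (h : IsDescentInterval f y v)
    (hf : ContinuousOn f^[n + 2] (Icc y v)) (hn : Odd n) (hp : p ∈ Ioc y v)
    (hfp : IsPeriodicPt f n p) : ∃ q ∈ Ioo y p, IsPeriodicPt f (n + 2) q := by
  have hp2 : f^[n + 2] p < p := by
    rw [add_comm, iterate_add_apply, hfp.eq]
    exact h.iterate_two_lt p hp
  have hy : y < f^[n + 2] y := h.lt_iterate_left (hn.add_even even_two)
  obtain ⟨q, hq, hfq⟩ :=
    exists_mem_Icc_isFixedPt (hf.mono (Icc_subset_Icc_right hp.2)) hp.1.le hy.le hp2.le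
  have hyq : y ≠ q := fun e => hy.ne' (e ▸ hfq)
  have hqp : q ≠ p := fun e => hp2.ne (e ▸ hfq)
  exact ⟨q, ⟨hq.1.lt_of_ne hyq, hq.2.lt_of_ne hqp⟩, hfq⟩

lemma exists_isPeriodicPt_add_two_mul (h : IsDescentInterval f y v)
    (hf : ∀ k, ContinuousOn f^[k] (Icc y v)) (hn : Odd n) (hp : p ∈ Ioc y v)
    (hfp : IsPeriodicPt f n p) (k : ℕ) :
    ∃ q ∈ Ioo y p, IsPeriodicPt f (n + 2 * (k + 1)) q := by
  induction k with
  | zero => exact h.exists_isPeriodicPt_add_two (hf _) hn hp hfp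
  | succ k ih =>
    obtain ⟨q, hq, hfq⟩ := ih
    obtain ⟨r, hr, hfr⟩ := h.exists_isPeriodicPt_add_two (hf _) (hn.add_even (even_two_mul _))
      ⟨hq.1, hq.2.le.trans hp.2⟩ hfq
    exact ⟨r, ⟨hr.1, hr.2.trans hq.2⟩, hfr⟩

lemma exists_minimalPeriod_eq (h : IsDescentInterval f y v)
    (hf : ∀ k, ContinuousOn f^[k] (Icc y v)) (hn : Odd n) (hv : f^[n] v ≤ v) :
    ∃ p ∈ Icc y v, minimalPeriod f p = n := by
  have hy : y < f^[n] y := h.lt_iterate_left hn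
  obtain ⟨p, ⟨hp, hfp⟩, hleast⟩ :=
    (isCompact_inter_fixedPoints isCompact_Icc (hf n)).exists_isLeast
      (exists_mem_Icc_isFixedPt (hf n) h.lt.le hy.le hv)
  have hyp : y < p := hp.1.lt_of_ne fun e => hy.ne' (e ▸ hfp)
  have hdvd : minimalPeriod f p ∣ n := IsPeriodicPt.minimalPeriod_dvd hfp
  have hodd : Odd (minimalPeriod f p) := hn.of_dvd_nat hdvd
  refine ⟨p, hp, (Nat.le_of_dvd hn.pos hdvd).eq_of_not_lt fun hlt => ?_⟩
  obtain ⟨k, hk⟩ : ∃ k, n = minimalPeriod f p + 2 * (k + 1) := by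
    obtain ⟨i, hi⟩ := hodd
    obtain ⟨j, hj⟩ := hn
    exact ⟨j - i - 1, by omega⟩
  obtain ⟨q, hq, hfq⟩ := h.exists_isPeriodicPt_add_two_mul hf hodd ⟨hyp, hp.2⟩
    (isPeriodicPt_minimalPeriod f p) k
  exact hq.2.not_ge (hleast ⟨⟨hq.1.le, hq.2.le.trans hp.2⟩, hk ▸ hfq⟩)

end IsDescentInterval

lemma exists_isDescentInterval_of_odd_minimalPeriod {s : Set α} [s.OrdConnected]
    (hf : ContinuousOn f s) (hmaps : MapsTo f s s) {x : α} (hx : x ∈ s)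
    (hodd : Odd (minimalPeriod f x)) (hfix : ¬IsFixedPt f x) :
    ∃ y v, IsDescentInterval f y v ∧ Icc y v ⊆ s ∧ IsPeriodicPt f (minimalPeriod f x) (f v) := by
  have hxper : x ∈ periodicPts f := minimalPeriod_pos_iff_mem_periodicPts.1 hodd.pos
  set P : Set α := range (f^[·] x)
  have hfin : P.Finite := finite_range_iterate hxper
  have hne : P.Nonempty := range_nonempty _
  have hPs : P ⊆ s := range_subset_iff.2 fun n => hmaps.iterate n hx
  have hPP : MapsTo f P P := mapsTo_range_iterate f x
  have hper : ∀ p ∈ P, minimalPeriod f p = minimalPeriod f x :=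
    forall_mem_range.2 (minimalPeriod_apply_iterate hxper)
  have hone : minimalPeriod f x ≠ 1 := mt minimalPeriod_eq_one_iff_isFixedPt.1 hfix
  obtain ⟨u, hu, hmin⟩ := exists_min_image P id hfin hne
  obtain ⟨c, hc, d, hd, hcd, hfd, hfc⟩ := exists_lt_apply_le_le_apply_of_finite hfin hne hPP
    fun p hp h => hone (hper p hp ▸ minimalPeriod_eq_one_iff_isFixedPt.2 h)
  have hc2 : ¬IsPeriodicPt f 2 c := fun h => hone <|
    Nat.eq_one_of_dvd_coprimes hodd.coprime_two_right dvd_rfl (hper c hc ▸ h.minimalPeriod_dvd)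
  have hud : Icc u d ⊆ s := s.Icc_subset (hPs hu) (hPs hd)
  obtain ⟨y, v, hI, hsub, rfl⟩ := exists_isDescentInterval (hf.mono hud)
    ((hf.iterate hmaps 2).mono hud) (hmin c hc) hcd (hmin _ (hPP.iterate 2 hu)) hfd hfc hc2
  exact ⟨y, v, hI, hsub.trans hud, hper _ hd ▸ isPeriodicPt_minimalPeriod f (f v)⟩

theorem odd_period_implies_period_add_two_general {s : Set α} [s.OrdConnected]
    (hf : ContinuousOn f s) (hmaps : MapsTo f s s) {x : α} (hx : x ∈ s)
    (hodd : Odd (minimalPeriod f x)) (hfix : ¬IsFixedPt f x) :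
    ∃ y ∈ s, minimalPeriod f y = minimalPeriod f x + 2 := by
  obtain ⟨y, v, hI, hsub, hfv⟩ :=
    exists_isDescentInterval_of_odd_minimalPeriod hf hmaps hx hodd hfix
  have hv : f^[minimalPeriod f x + 2] v < v := by
    rw [iterate_add_two_eq_of_isPeriodicPt_apply hfv]
    exact hI.iterate_two_lt v ⟨hI.lt, le_rfl⟩
  obtain ⟨p, hp, hpm⟩ := hI.exists_minimalPeriod_eq (fun k => (hf.iterate hmaps k).mono hsub)
    (hodd.add_even even_two) hv.le
  exact ⟨p, hsub hp, hpm⟩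

end IntermediateValue

lemma periodPt_iff_minimalPeriod_eq {f : ℝ → ℝ} {m : ℕ} {x : ℝ} (hm : 0 < m) :
    PeriodPt f m x ↔ minimalPeriod f x = m := by
  constructor
  · rintro ⟨hfx, hne⟩
    have hpos : 0 < minimalPeriod f x := IsPeriodicPt.minimalPeriod_pos hm hfx
    exact (IsPeriodicPt.minimalPeriod_le hm hfx).eq_of_not_lt fun h =>
      hne _ hpos h iterate_minimalPeriod
  · rintro rfl
    exact ⟨iterate_minimalPeriod, fun i hi him =>
      not_isPeriodicPt_of_pos_of_lt_minimalPeriod hi.ne' him⟩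

theorem odd_period_implies_period_add_two (a b : ℝ) (hab : a ≤ b) (f : ℝ → ℝ)
    (hcont : ContinuousOn f (Set.Icc a b))
    (hmaps : Set.MapsTo f (Set.Icc a b) (Set.Icc a b))
    (m : ℕ) (hm : 3 ≤ m) (hodd : Odd m)
    (x : ℝ) (hx : x ∈ Set.Icc a b) (hper : PeriodPt f m x) :
    ∃ y ∈ Set.Icc a b, PeriodPt f (m + 2) y := by
  obtain rfl := (periodPt_iff_minimalPeriod_eq (by omega)).1 hper
  have hfix : ¬IsFixedPt f x := mt minimalPeriod_eq_one_iff_isFixedPt.2 (by omega)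
  simpa only [periodPt_iff_minimalPeriod_eq (Nat.succ_pos _)] using
    odd_period_implies_period_add_two_general hcont hmaps hx hodd hfix
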